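/- Let d, s be positive integers, p an odd prime, and r an integer such that d + p^s - d p^s ≤ r ≤ p^s, gcd(p,d) = 1, and p^s ≡ r (mod d), and let m = (p^s - r)/d or m = p^s - 1. Then, modulo p^{s+4}, sum_{k=0}^{m} (-1)^k (2dk+r) (r/d)_k^5 / (k!)^5 ≡ (-1)^{(r-p^s)/d} * sum_{k=0}^{(p^s-r)/d} ((r/d)_k^2 (1 - r/d)_k / (k!)^3) * ( p^s - p^{3s} * sum_{j=1}^{k} ( 1/(dj)^2 + 1/(dj-d+r)^2 ) ). -/

import Mathlib

open Finset

/-- Rising factorial `(x)_k = x(x+1)⋯(x+k-1)`. -/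
def poch (x : ℚ) (k : ℕ) : ℚ := ∏ i ∈ Finset.range k, (x + i)

/-- `a ≡ b (mod p^m)`: the `p`-adic valuation of `a - b` is at least `m`. -/
def pcong (p : ℕ) (m : ℕ) (a b : ℚ) : Prop :=
  a = b ∨ (m : ℤ) ≤ padicValRat p (a - b)

/-- Generalized harmonic number `H_m^{(ℓ)} = ∑_{k=1}^m 1/k^ℓ`. -/
def harm (m ℓ : ℕ) : ℚ := ∑ k ∈ Finset.Icc 1 m, 1 / (k : ℚ) ^ ℓ

/-!
Put `x = r / d`, `t = p^s / d` and `n = (p^s - r) / d`, so that `x + n = t`. Up to the factor `d`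
the left-hand side is the case `U = V = 0` of a very-well-poised sum with parameters `x`, `x ± √U`,
`x ± √V`. Two applications of the Pfaff–Saalschütz summation followed by telescoping turn any
partial sum of it into a double sum with prefactor divisible by `p^s`. Along `U = -ε t²`,
`V = ε t²` the terms of the double sum have `p`-integral expansions `a + b ε + O(p^4 ε²)`, and
exchanging `U` and `V` shows that the sum is even in `ε`; so modulo `p^(s+4)` the value at `ε = 0`
may be replaced by the value at `ε = 1`. There the sum terminates at `k = n`, because
`x - √V = -n`, and Whipple's transformation evaluates it as a single sum, whose first-order
expansion is the right-hand side.
-/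

/-- The product `(c + √V)_k (c - √V)_k`, written as a polynomial in `V` so that `√V` need not be
rational. -/
def pochPair (c V : ℚ) (k : ℕ) : ℚ := ∏ h ∈ range k, ((c + h) ^ 2 - V)

section RisingFactorial

theorem poch_zero (x : ℚ) : poch x 0 = 1 := prod_range_zero _

theorem poch_succ (x : ℚ) (k : ℕ) : poch x (k + 1) = poch x k * (x + k) := prod_range_succ _ _

theorem poch_add (x : ℚ) (i j : ℕ) : poch x (i + j) = poch x i * poch (x + i) j := by
  simp only [poch, prod_range_add, Nat.cast_add, add_assoc]

theorem poch_succ_left (x : ℚ) (k : ℕ) : poch x (k + 1) = x * poch (x + 1) k := by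
  rw [add_comm k, poch_add, poch_succ, poch_zero, Nat.cast_one, Nat.cast_zero, add_zero, one_mul]

theorem mul_poch_add_one (x : ℚ) (k : ℕ) : x * poch (x + 1) k = poch x k * (x + k) := by
  rw [← poch_succ_left, poch_succ]

theorem poch_one_eq_factorial (k : ℕ) : poch 1 k = k.factorial := by
  induction k with
  | zero => simp [poch_zero]
  | succ k ih => rw [poch_succ, ih, Nat.factorial_succ]; push_cast; ring

theorem poch_neg_natCast_of_lt {k j : ℕ} (h : k < j) : poch (-(k : ℚ)) j = 0 :=
  prod_eq_zero (mem_range.2 h) (neg_add_cancel _)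

theorem poch_ne_zero {c : ℚ} {k : ℕ} (h : ∀ i < k, c + i ≠ 0) : poch c k ≠ 0 :=
  prod_ne_zero_iff.2 fun i hi => h i (mem_range.1 hi)

theorem poch_one_sub_add (x : ℚ) (n : ℕ) : poch (1 - (x + n)) n = (-1) ^ n * poch x n := by
  rw [poch, poch, ← prod_range_reflect, ← card_range n, ← prod_const, card_range,
    ← prod_mul_distrib]
  refine prod_congr rfl fun i hi => ?_
  have hi : i + 1 ≤ n := mem_range.1 hi
  rw [Nat.sub_sub, add_comm 1, Nat.cast_sub hi]
  push_cast
  ring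

theorem poch_neg_natCast_self (n : ℕ) : poch (-(n : ℚ)) n = (-1) ^ n * n.factorial := by
  rw [← poch_one_eq_factorial, ← poch_one_sub_add, sub_add_cancel_left]

theorem poch_neg_natCast_add (i j : ℕ) :
    poch (-((i + j : ℕ) : ℚ)) i = (-1) ^ i * (i + j).factorial / j.factorial := by
  have hsplit := poch_add (-((i + j : ℕ) : ℚ)) i j
  rw [show -((i + j : ℕ) : ℚ) + i = -(j : ℚ) by push_cast; ring, poch_neg_natCast_self,
    poch_neg_natCast_self, pow_add] at hsplit
  rw [eq_div_iff (mod_cast j.factorial_ne_zero)]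
  refine mul_left_cancel₀ (pow_ne_zero j (neg_ne_zero.2 one_ne_zero)) ?_
  linear_combination -hsplit

theorem poch_eq_factorial_mul_multichoose (x : ℚ) (k : ℕ) :
    poch x k = k.factorial * Ring.multichoose x k := by
  rw [← nsmul_eq_mul, Ring.factorial_nsmul_multichoose_eq_ascPochhammer,
    Polynomial.ascPochhammer_smeval_eq_eval]
  induction k with
  | zero => simp [poch_zero]
  | succ k ih => rw [poch_succ, ih, ascPochhammer_succ_eval]

theorem pochPair_zero (c V : ℚ) : pochPair c V 0 = 1 := prod_range_zero _

theorem pochPair_succ (c V : ℚ) (k : ℕ) :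
    pochPair c V (k + 1) = pochPair c V k * ((c + k) ^ 2 - V) := prod_range_succ _ _

theorem pochPair_add (c V : ℚ) (i j : ℕ) :
    pochPair c V (i + j) = pochPair c V i * pochPair (c + i) V j := by
  simp only [pochPair, prod_range_add, Nat.cast_add, add_assoc]

theorem pochPair_sq (c t : ℚ) (k : ℕ) : pochPair c (t ^ 2) k = poch (c + t) k * poch (c - t) k := by
  rw [pochPair, poch, poch, ← prod_mul_distrib]
  exact prod_congr rfl fun i _ => by ring

theorem pochPair_zero_right (c : ℚ) (k : ℕ) : pochPair c 0 k = poch c k ^ 2 := by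
  simp only [pochPair, poch, sub_zero, prod_pow]

theorem pochPair_ne_zero {c V : ℚ} {k : ℕ} (h : ∀ i < k, (c + i) ^ 2 - V ≠ 0) :
    pochPair c V k ≠ 0 :=
  prod_ne_zero_iff.2 fun i hi => h i (mem_range.1 hi)

theorem pochPair_eq_zero_of_sq {c t : ℚ} {n k : ℕ} (ht : c + n = t) (hnk : n < k) :
    pochPair c (t ^ 2) k = 0 :=
  prod_eq_zero (mem_range.2 hnk) (by rw [ht, sub_self])

theorem pochPair_mul_eq_mul_prod {c : ℚ} {k : ℕ} (hc : ∀ h < k, c + h ≠ 0) (ε T : ℚ) :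
    pochPair c (ε * T) k = poch c k ^ 2 * ∏ h ∈ range k, (1 - ε * (T / (c + h) ^ 2)) := by
  rw [pochPair, poch, ← prod_pow, ← prod_mul_distrib]
  refine prod_congr rfl fun h hh => ?_
  have := hc h (mem_range.1 hh)
  field_simp

end RisingFactorial

section Summation

/-- The `j`-th term of the terminating balanced series `₃F₂(b, -k, 2c-1-b+k; c+√V, c-√V; 1)`. -/
def saalschutzTerm (b c V : ℚ) (k j : ℕ) : ℚ :=
  poch b j * poch (-(k : ℚ)) j * poch (2 * c - 1 - b + k) j / (j.factorial * pochPair c V j)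

theorem saalschutzTerm_of_lt (b c V : ℚ) {k j : ℕ} (h : k < j) : saalschutzTerm b c V k j = 0 := by
  simp only [saalschutzTerm, poch_neg_natCast_of_lt h, mul_zero, zero_mul, zero_div]

theorem sum_saalschutzTerm_recurrence (b c V : ℚ) (k J : ℕ)
    (h : ∀ i < J, (c + i) ^ 2 - V ≠ 0) :
    ∑ j ∈ range (J + 1), (((c + k) ^ 2 - V) * saalschutzTerm b c V (k + 1) j
      - ((c - b + k) ^ 2 - V) * saalschutzTerm b c V k j)
    = (2 * c - b + 2 * k) * poch b (J + 1) * poch (-(k : ℚ)) J * poch (2 * c - b + k) J /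
      (J.factorial * pochPair c V J) := by
  induction J with
  | zero =>
    simp only [zero_add, sum_range_one, saalschutzTerm, poch_zero, pochPair_zero, poch_succ,
      Nat.factorial_zero, Nat.cast_one, Nat.cast_zero, mul_one, div_one]
    ring
  | succ J ih =>
    have hneg : poch (-((k + 1 : ℕ) : ℚ)) (J + 1) = (-(k + 1 : ℚ)) * poch (-(k : ℚ)) J := by
      rw [poch_succ_left]; push_cast; ring_nf
    have hlow : poch (2 * c - 1 - b + k) (J + 1)
        = (2 * c - 1 - b + k) * poch (2 * c - b + k) J := by
      rw [poch_succ_left]; ring_nf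
    have hhigh : poch (2 * c - 1 - b + (k + 1 : ℕ)) (J + 1)
        = poch (2 * c - b + k) J * (2 * c - b + k + J) := by
      rw [← poch_succ]; push_cast; ring_nf
    have hpair : pochPair c V J ≠ 0 := pochPair_ne_zero fun i hi => h i (by omega)
    have hJ : (c + J) ^ 2 - V ≠ 0 := h J (by omega)
    have hfact : (J.factorial : ℚ) ≠ 0 := mod_cast J.factorial_ne_zero
    rw [sum_range_succ, ih fun i hi => h i (by omega), saalschutzTerm, saalschutzTerm, hneg, hlow,
      hhigh, poch_succ b (J + 1), poch_succ b J, poch_succ (-(k : ℚ)) J,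
      poch_succ (2 * c - b + k) J, pochPair_succ, Nat.factorial_succ]
    push_cast
    field_simp
    ring

theorem sum_saalschutzTerm_eq_of_le (b c V : ℚ) {k M : ℕ} (hM : k ≤ M) :
    ∑ j ∈ range (M + 1), saalschutzTerm b c V k j
      = ∑ j ∈ range (k + 1), saalschutzTerm b c V k j :=
  eventually_constant_sum (fun _ hj => saalschutzTerm_of_lt b c V hj) (Nat.succ_le_succ hM)

theorem sum_saalschutzTerm (b c V : ℚ) (k : ℕ) (h : ∀ i < k, (c + i) ^ 2 - V ≠ 0) :
    ∑ j ∈ range (k + 1), saalschutzTerm b c V k j = pochPair (c - b) V k / pochPair c V k := by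
  induction k with
  | zero => simp [saalschutzTerm, pochPair_zero, poch_zero]
  | succ k ih =>
    have hrec := sum_saalschutzTerm_recurrence b c V k (k + 1) h
    rw [poch_neg_natCast_of_lt k.lt_succ_self, sum_sub_distrib, ← mul_sum, ← mul_sum,
      sum_saalschutzTerm_eq_of_le b c V k.le_succ, ih fun i hi => h i (by omega), mul_zero,
      zero_mul, zero_div, sub_eq_zero] at hrec
    rw [pochPair_succ, pochPair_succ, mul_div_mul_comm, mul_div_left_comm,
      ← mul_div_assoc, eq_div_iff (h k k.lt_succ_self)]
    linear_combination hrec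

/-- The `j`-th term of the terminating series `₂F₁(b, -k; c; 1)`. -/
def vandermondeTerm (b c : ℚ) (k j : ℕ) : ℚ :=
  poch b j * poch (-(k : ℚ)) j / (j.factorial * poch c j)

theorem vandermondeTerm_of_lt (b c : ℚ) {k j : ℕ} (h : k < j) : vandermondeTerm b c k j = 0 := by
  simp only [vandermondeTerm, poch_neg_natCast_of_lt h, mul_zero, zero_div]

theorem multichoose_sub (b c : ℚ) (k : ℕ) :
    Ring.multichoose (c - b) k = ∑ ij ∈ antidiagonal k,
      (-1) ^ ij.1 * Ring.multichoose b ij.1 * Ring.multichoose (c + ij.1) ij.2 := by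
  rw [Ring.multichoose_eq, show c - b + k - 1 = -b + (c + k - 1) by ring,
    Ring.add_choose_eq _ (Commute.all _ _)]
  refine sum_congr rfl fun ij hij => ?_
  rw [Ring.choose_neg', Ring.multichoose_eq (c + ij.1), ← mem_antidiagonal.1 hij, Nat.cast_add,
    ← add_assoc, Units.smul_def, zsmul_eq_mul, Int.negOnePow_def, zpow_natCast]
  push_cast
  rfl

theorem sum_vandermondeTerm (b c : ℚ) {k M : ℕ} (hM : k ≤ M) (h : ∀ i < k, c + i ≠ 0) :
    ∑ j ∈ range (M + 1), vandermondeTerm b c k j = poch (c - b) k / poch c k := by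
  rw [eventually_constant_sum (fun _ hj => vandermondeTerm_of_lt b c hj) (Nat.succ_le_succ hM),
    ← Nat.sum_antidiagonal_eq_sum_range_succ_mk (fun ij : ℕ × ℕ => vandermondeTerm b c k ij.1),
    poch_eq_factorial_mul_multichoose (c - b), multichoose_sub, mul_sum, sum_div]
  refine sum_congr rfl fun ⟨i, j⟩ hij => ?_
  obtain rfl : i + j = k := mem_antidiagonal.1 hij
  have hi : poch c i ≠ 0 := poch_ne_zero fun l hl => h l (by omega)
  have hj : poch (c + i) j ≠ 0 := poch_ne_zero fun l hl => by
    rw [add_assoc, ← Nat.cast_add]; exact h (i + l) (by omega)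
  rw [vandermondeTerm, poch_add c, poch_neg_natCast_add, poch_eq_factorial_mul_multichoose b]
  rw [poch_eq_factorial_mul_multichoose (c + i)] at hj ⊢
  have hj' := right_ne_zero_of_mul hj
  field_simp

theorem sum_range_alternating_poch (x : ℚ) (l N : ℕ) :
    ∑ k ∈ range (N + 1), (-1 : ℚ) ^ k * (x + 2 * k) * poch x k / k.factorial
      * (poch (-(k : ℚ)) l * poch (x + k) l)
    = (-1) ^ N * poch x (N + 1) / N.factorial * (poch (-(N : ℚ)) l * poch (x + N + 1) l) := by
  induction N with
  | zero =>
    rcases Nat.eq_zero_or_pos l with rfl | hl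
    · simp [poch_zero, poch_succ]
    · have : poch (-((0 : ℕ) : ℚ)) l = 0 := poch_neg_natCast_of_lt hl
      simp only [zero_add, sum_range_one, this, zero_mul, mul_zero]
  | succ N ih =>
    have hneg := mul_poch_add_one (-(N + 1 : ℚ)) l
    rw [neg_add, neg_add_cancel_right, ← neg_add] at hneg
    have hpos := mul_poch_add_one (x + N + 1) l
    have hN : poch (-(N : ℚ)) l = poch (-(N + 1 : ℚ)) l * (N + 1 - l) / (N + 1) := by
      rw [eq_div_iff (by positivity)]
      linear_combination -hneg
    rw [sum_range_succ, ih, hN, poch_succ x (N + 1), Nat.factorial_succ, pow_succ]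
    push_cast
    rw [← add_assoc x]
    have hfact : (N.factorial : ℚ) ≠ 0 := mod_cast N.factorial_ne_zero
    field_simp
    linear_combination (poch x (N + 1) * poch (-(N + 1 : ℚ)) l) * hpos

end Summation

section WellPoised

/-- The partial sum up to `k = N` of the very-well-poised series `x · ₆F₅(-1)` with parameters
`x`, `1 + x/2`, `x ± √U`, `x ± √V`. It deforms the sum of fifth powers, which is the case
`U = V = 0`. -/
def wellPoisedSum (x U V : ℚ) (N : ℕ) : ℚ :=
  ∑ k ∈ range (N + 1), (-1 : ℚ) ^ k * (x + 2 * k) * poch x k / k.factorial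
    * (pochPair x U k / pochPair 1 U k * (pochPair x V k / pochPair 1 V k))

/-- The coefficient of `(-k)_(i+j) (x+k)_(i+j)` in the expansion of the `k`-th ratio of
`pochPair`s in `wellPoisedSum x U V`, obtained by applying the Pfaff–Saalschütz summation twice. -/
def wellPoisedCoeff (x U V : ℚ) (i j : ℕ) : ℚ :=
  poch (1 - x) i / (i.factorial * pochPair 1 U i) *
    (poch (1 - x) j * pochPair x V i / (j.factorial * pochPair 1 V (i + j)))

theorem wellPoisedSum_comm (x U V : ℚ) (N : ℕ) :
    wellPoisedSum x U V N = wellPoisedSum x V U N :=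
  sum_congr rfl fun k _ => by rw [mul_comm (pochPair x U k / _)]

theorem wellPoisedSum_zero_zero (x : ℚ) (N : ℕ) :
    wellPoisedSum x 0 0 N =
      ∑ k ∈ range (N + 1), (-1 : ℚ) ^ k * (x + 2 * k) * poch x k ^ 5 / (k.factorial : ℚ) ^ 5 := by
  refine sum_congr rfl fun k _ => ?_
  rw [pochPair_zero_right, pochPair_zero_right, poch_one_eq_factorial]
  field_simp

theorem wellPoisedSum_sq_of_le {x t : ℚ} {n N : ℕ} (ht : x + n = t) (hnN : n ≤ N) (U : ℚ) :
    wellPoisedSum x U (t ^ 2) N = wellPoisedSum x U (t ^ 2) n :=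
  eventually_constant_sum (fun k hk => by
    rw [pochPair_eq_zero_of_sq ht hk, zero_div, mul_zero, mul_zero]) (Nat.succ_le_succ hnN)

theorem pochPair_div_eq_sum (x U : ℚ) {k N : ℕ} (hk : k ≤ N)
    (hU : ∀ i < N, (1 + (i : ℚ)) ^ 2 - U ≠ 0) :
    pochPair x U k / pochPair 1 U k = ∑ i ∈ range (N + 1), saalschutzTerm (1 - x) 1 U k i := by
  rw [sum_saalschutzTerm_eq_of_le _ _ _ hk, sum_saalschutzTerm _ _ _ _ fun i hi => hU i (by omega),
    sub_sub_cancel]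

theorem saalschutzTerm_mul_pochPair_div_eq_sum (x U V : ℚ) (i : ℕ) {k N : ℕ} (hk : k ≤ N)
    (hV : ∀ i < N, (1 + (i : ℚ)) ^ 2 - V ≠ 0) :
    saalschutzTerm (1 - x) 1 U k i * (pochPair x V k / pochPair 1 V k) =
      ∑ j ∈ range (N + 1),
        wellPoisedCoeff x U V i j * (poch (-(k : ℚ)) (i + j) * poch (x + k) (i + j)) := by
  rcases Nat.lt_or_ge k i with hki | hik
  · rw [saalschutzTerm_of_lt _ _ _ hki, zero_mul]
    refine (sum_eq_zero fun j _ => ?_).symm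
    rw [poch_neg_natCast_of_lt (by omega), zero_mul, mul_zero]
  · obtain ⟨l, rfl⟩ := Nat.exists_eq_add_of_le hik
    have hshift : pochPair (x + i) V l / pochPair (1 + i) V l =
        ∑ j ∈ range (N + 1), saalschutzTerm (1 - x) (1 + i) V l j := by
      rw [sum_saalschutzTerm_eq_of_le _ _ _ (by omega : l ≤ N), sum_saalschutzTerm _ _ _ _
        fun j hj => by rw [add_assoc, ← Nat.cast_add]; exact hV (i + j) (by omega)]
      ring_nf
    rw [pochPair_add, pochPair_add 1 V, mul_div_mul_comm, hshift, mul_sum, mul_sum]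
    refine sum_congr rfl fun j _ => ?_
    rw [saalschutzTerm, saalschutzTerm, wellPoisedCoeff, poch_add _ i j, poch_add _ i j,
      pochPair_add 1 V i j,
      show 2 * (1 + (i : ℚ)) - 1 - (1 - x) + l = x + (i + l : ℕ) + i by push_cast; ring,
      show 2 * 1 - 1 - (1 - x) + ((i + l : ℕ) : ℚ) = x + (i + l : ℕ) by ring,
      show -((i + l : ℕ) : ℚ) + i = -(l : ℚ) by push_cast; ring]
    simp only [div_eq_mul_inv, mul_inv]
    ring

theorem wellPoisedSum_eq_sum_wellPoisedCoeff (x : ℚ) {U V : ℚ} {N : ℕ}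
    (hU : ∀ i < N, (1 + (i : ℚ)) ^ 2 - U ≠ 0) (hV : ∀ i < N, (1 + (i : ℚ)) ^ 2 - V ≠ 0) :
    wellPoisedSum x U V N = (-1) ^ N * poch x (N + 1) / N.factorial *
      ∑ i ∈ range (N + 1), ∑ j ∈ range (N + 1),
        wellPoisedCoeff x U V i j * (poch (-(N : ℚ)) (i + j) * poch (x + N + 1) (i + j)) := by
  have hexpand : ∀ k ∈ range (N + 1), pochPair x U k / pochPair 1 U k *
      (pochPair x V k / pochPair 1 V k) = ∑ i ∈ range (N + 1), ∑ j ∈ range (N + 1),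
        wellPoisedCoeff x U V i j * (poch (-(k : ℚ)) (i + j) * poch (x + k) (i + j)) := by
    intro k hk
    have hkN : k ≤ N := Nat.lt_succ_iff.1 (mem_range.1 hk)
    rw [pochPair_div_eq_sum x U hkN hU, sum_mul]
    exact sum_congr rfl fun i _ => saalschutzTerm_mul_pochPair_div_eq_sum x U V i hkN hV
  rw [wellPoisedSum, sum_congr rfl fun k hk => by rw [hexpand k hk]]
  simp only [mul_sum]
  rw [sum_comm]
  refine sum_congr rfl fun i _ => ?_
  rw [sum_comm]
  refine sum_congr rfl fun j _ => ?_
  rw [mul_left_comm, ← sum_range_alternating_poch, mul_sum]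
  exact sum_congr rfl fun k _ => mul_left_comm _ _ _

theorem wellPoisedCoeff_sq_mul {x t : ℚ} {i l : ℕ} (ht : x + (i + l : ℕ) = t)
    (hplus : ∀ h < i + l, (1 + (h : ℚ)) + t ≠ 0) (U : ℚ) (j : ℕ) :
    wellPoisedCoeff x U (t ^ 2) i j *
        (poch (-((i + l : ℕ) : ℚ)) (i + j) * poch (x + (i + l : ℕ) + 1) (i + j)) =
      poch (1 - x) i * pochPair x (t ^ 2) i / (i.factorial * pochPair 1 U i) *
        (poch (-((i + l : ℕ) : ℚ)) i / poch (1 - t) i) *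
        vandermondeTerm (1 - x) (1 - t + i) l j := by
  rcases Nat.lt_or_ge l j with hlj | hjl
  · rw [poch_neg_natCast_of_lt (by omega), vandermondeTerm_of_lt _ _ hlj]
    ring
  · have hne : poch (1 + t) (i + j) ≠ 0 := poch_ne_zero fun h hh => by
      rw [add_right_comm]; exact hplus h (by omega)
    rw [wellPoisedCoeff, vandermondeTerm, pochPair_sq 1 t (i + j), ht,
      poch_add (-((i + l : ℕ) : ℚ)) i j, poch_add (1 - t) i j, add_comm t 1,
      show -((i + l : ℕ) : ℚ) + i = -(l : ℚ) by push_cast; ring]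
    simp only [div_eq_mul_inv, mul_inv]
    field_simp

theorem poch_neg_div_poch_mul {x t : ℚ} {i l : ℕ} (ht : x + (i + l : ℕ) = t) :
    poch (-((i + l : ℕ) : ℚ)) i / poch (1 - t) i * (poch (-(l : ℚ)) l / poch (1 - t + i) l) =
      (i + l).factorial / poch x (i + l) := by
  rw [div_mul_div_comm, ← poch_add (1 - t), ← ht, poch_one_sub_add,
    show -(l : ℚ) = -((i + l : ℕ) : ℚ) + i by push_cast; ring, ← poch_add, poch_neg_natCast_self,
    mul_div_mul_left _ _ (pow_ne_zero _ (neg_ne_zero.2 one_ne_zero))]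

/-- **Whipple's transformation** of the very-well-poised sum that terminates because
`x - √V = -n`. -/
theorem wellPoisedSum_sq {x t : ℚ} {n : ℕ} (ht : x + n = t) (hx : ∀ i < n, x + i ≠ 0) {U : ℚ}
    (hU : ∀ i < n, (1 + (i : ℚ)) ^ 2 - U ≠ 0) (ht' : ∀ i < n, (1 + (i : ℚ)) ^ 2 - t ^ 2 ≠ 0) :
    wellPoisedSum x U (t ^ 2) n = (-1) ^ n * t * ∑ i ∈ range (n + 1),
      poch (1 - x) i * pochPair x (t ^ 2) i / (i.factorial * pochPair 1 U i) := by
  rw [wellPoisedSum_eq_sum_wellPoisedCoeff x hU ht', mul_sum, mul_sum]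
  refine sum_congr rfl fun i hi => ?_
  obtain ⟨l, rfl⟩ := Nat.exists_eq_add_of_le (Nat.lt_succ_iff.1 (mem_range.1 hi))
  have hfactor : ∀ h < i + l, (1 + (h : ℚ)) + t ≠ 0 ∧ (1 + (h : ℚ)) - t ≠ 0 := fun h hh =>
    mul_ne_zero_iff.1 (sq_sub_sq (1 + (h : ℚ)) t ▸ ht' h hh)
  have hinner : ∑ j ∈ range (i + l + 1), vandermondeTerm (1 - x) (1 - t + i) l j =
      poch (-(l : ℚ)) l / poch (1 - t + i) l := by
    rw [sum_vandermondeTerm _ _ (by omega) fun h hh => ?_]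
    · rw [← ht]; push_cast; ring_nf
    · have := (hfactor (i + h) (by omega)).2
      push_cast at this
      convert this using 1
      ring
  have hpoch : poch x (i + l) ≠ 0 := poch_ne_zero hx
  have hfact : ((i + l).factorial : ℚ) ≠ 0 := mod_cast (i + l).factorial_ne_zero
  rw [sum_congr rfl fun j _ => wellPoisedCoeff_sq_mul ht (fun h hh => (hfactor h hh).1) U j,
    ← mul_sum, hinner, mul_assoc _ (poch _ i / _), poch_neg_div_poch_mul ht, poch_succ, ht]
  field_simp

end WellPoised

section PadicIntegrality

variable {p : ℕ} [Fact p.Prime]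

/-- The ideal `p^e ℤ_(p)` of the ring of `p`-integral rationals, as an additive subgroup of `ℚ`. -/
def padicIdeal (p : ℕ) [Fact p.Prime] (e : ℕ) : AddSubgroup ℚ where
  carrier := {x | padicNorm p x ≤ (p : ℚ) ^ (-(e : ℤ))}
  zero_mem' := by simp only [Set.mem_ofPred_eq, padicNorm.zero]; positivity
  add_mem' hx hy := padicNorm.nonarchimedean.trans (max_le hx hy)
  neg_mem' {x} hx := by rwa [Set.mem_ofPred_eq, padicNorm.neg]

theorem mem_padicIdeal {e : ℕ} {x : ℚ} :
    x ∈ padicIdeal p e ↔ padicNorm p x ≤ (p : ℚ) ^ (-(e : ℤ)) := Iff.rfl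

theorem mem_padicIdeal_zero {x : ℚ} : x ∈ padicIdeal p 0 ↔ padicNorm p x ≤ 1 := by
  rw [mem_padicIdeal, Nat.cast_zero, neg_zero, zpow_zero]

theorem one_lt_natCast_prime : 1 < (p : ℚ) := mod_cast (Fact.out : p.Prime).one_lt

theorem padicIdeal_antitone : Antitone (padicIdeal p) := fun _ _ hef _ hx =>
  (mem_padicIdeal.1 hx).trans
    (zpow_le_zpow_right₀ one_lt_natCast_prime.le (neg_le_neg (Nat.cast_le.2 hef)))

theorem mem_padicIdeal_iff_of_ne_zero {e : ℕ} {x : ℚ} (hx : x ≠ 0) :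
    x ∈ padicIdeal p e ↔ (e : ℤ) ≤ padicValRat p x := by
  rw [mem_padicIdeal, padicNorm.eq_zpow_of_nonzero hx,
    zpow_le_zpow_iff_right₀ one_lt_natCast_prime, neg_le_neg_iff]

theorem pcong_of_sub_mem_padicIdeal {e : ℕ} {a b : ℚ} (h : a - b ∈ padicIdeal p e) :
    pcong p e a b :=
  or_iff_not_imp_left.2 fun hab => (mem_padicIdeal_iff_of_ne_zero (sub_ne_zero.2 hab)).1 h

theorem mul_mem_padicIdeal_add {e f : ℕ} {a b : ℚ} (ha : a ∈ padicIdeal p e)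
    (hb : b ∈ padicIdeal p f) : a * b ∈ padicIdeal p (e + f) := by
  rw [mem_padicIdeal, padicNorm.mul, Nat.cast_add, neg_add,
    zpow_add₀ (zero_lt_one.trans one_lt_natCast_prime).ne']
  exact mul_le_mul (mem_padicIdeal.1 ha) (mem_padicIdeal.1 hb) (padicNorm.nonneg _) (by positivity)

theorem mul_mem_padicIdeal {e : ℕ} {a b : ℚ} (ha : a ∈ padicIdeal p 0) (hb : b ∈ padicIdeal p e) :
    a * b ∈ padicIdeal p e := by
  rw [← zero_add e]
  exact mul_mem_padicIdeal_add ha hb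

theorem sq_mem_padicIdeal_two {a : ℚ} (ha : a ∈ padicIdeal p 1) : a ^ 2 ∈ padicIdeal p 2 := by
  rw [sq]
  exact mul_mem_padicIdeal_add (e := 1) (f := 1) ha ha

theorem intCast_mem_padicIdeal (z : ℤ) : (z : ℚ) ∈ padicIdeal p 0 :=
  mem_padicIdeal_zero.2 (padicNorm.of_int z)

theorem natCast_mem_padicIdeal (n : ℕ) : (n : ℚ) ∈ padicIdeal p 0 :=
  mem_padicIdeal_zero.2 (padicNorm.of_nat n)

theorem one_mem_padicIdeal : (1 : ℚ) ∈ padicIdeal p 0 :=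
  mod_cast natCast_mem_padicIdeal (p := p) 1

theorem neg_one_pow_mem_padicIdeal (n : ℕ) : (-1 : ℚ) ^ n ∈ padicIdeal p 0 :=
  mod_cast intCast_mem_padicIdeal (p := p) ((-1) ^ n)

theorem natCast_pow_mem_padicIdeal (s : ℕ) : (p : ℚ) ^ s ∈ padicIdeal p s := by
  have h := (padicNorm.dvd_iff_norm_le (p := p) (n := s) (z := (p ^ s : ℕ))).1 dvd_rfl
  rw [mem_padicIdeal]
  exact_mod_cast h

theorem div_natCast_mem_padicIdeal {e d : ℕ} {a : ℚ} (ha : a ∈ padicIdeal p e) (h : p.Coprime d) :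
    a / d ∈ padicIdeal p e := by
  rwa [mem_padicIdeal, padicNorm.div,
    (padicNorm.nat_eq_one_iff d).2 (((Fact.out : p.Prime).coprime_iff_not_dvd).1 h), div_one]

theorem padicNorm_one_sub {w : ℚ} (h : w ∈ padicIdeal p 1) : padicNorm p (1 - w) = 1 := by
  have hlt : padicNorm p (-w) < padicNorm p 1 := by
    rw [padicNorm.neg, padicNorm.one]
    refine (mem_padicIdeal.1 h).trans_lt ?_
    rw [Nat.cast_one, zpow_neg_one]
    exact inv_lt_one_of_one_lt₀ one_lt_natCast_prime
  rw [sub_eq_add_neg, padicNorm.add_eq_max_of_ne hlt.ne', max_eq_left hlt.le, padicNorm.one]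

theorem one_sub_ne_zero {w : ℚ} (h : w ∈ padicIdeal p 1) : 1 - w ≠ 0 := fun h0 =>
  zero_ne_one ((padicNorm.zero (p := p)) ▸ h0 ▸ padicNorm_one_sub h)

theorem inv_one_sub_mem_padicIdeal {w : ℚ} (h : w ∈ padicIdeal p 1) :
    (1 - w)⁻¹ ∈ padicIdeal p 0 := by
  rw [mem_padicIdeal_zero, ← one_div, padicNorm.div, padicNorm_one_sub h, padicNorm.one,
    one_div_one]

theorem div_intCast_mem_padicIdeal {s : ℕ} {t : ℚ} (ht : t ∈ padicIdeal p s) {z : ℤ} (hz : z ≠ 0)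
    (hlt : |z| < (p : ℤ) ^ s) : t / z ∈ padicIdeal p 1 := by
  have hdvd : ¬ ((p ^ s : ℕ) : ℤ) ∣ z := fun h =>
    hz (Int.eq_zero_of_abs_lt_dvd h (by exact_mod_cast hlt))
  have hzq : (z : ℚ) ≠ 0 := Int.cast_ne_zero.2 hz
  rw [padicNorm.dvd_iff_norm_le, ← mem_padicIdeal, mem_padicIdeal_iff_of_ne_zero hzq] at hdvd
  rcases eq_or_ne t 0 with rfl | ht0
  · rw [zero_div]
    exact zero_mem _
  · rw [mem_padicIdeal_iff_of_ne_zero ht0] at ht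
    rw [mem_padicIdeal_iff_of_ne_zero (div_ne_zero ht0 hzq), padicValRat.div ht0 hzq]
    omega

theorem poch_div_factorial_mem_padicIdeal {x : ℚ} (hx : x ∈ padicIdeal p 0) (k : ℕ) :
    poch x k / k.factorial ∈ padicIdeal p 0 := by
  rw [mem_padicIdeal_zero] at hx ⊢
  have hx' : ‖(x : ℚ_[p])‖ ≤ 1 := by rw [Padic.eq_padicNorm]; exact_mod_cast hx
  have hcast : ((Ring.multichoose x k : ℚ) : ℚ_[p]) =
      (Ring.multichoose (⟨x, hx'⟩ : ℤ_[p]) k : ℤ_[p]) :=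
    (Ring.map_multichoose (Rat.castHom ℚ_[p]) x k).trans
      (Ring.map_multichoose PadicInt.Coe.ringHom ⟨x, hx'⟩ k).symm
  have hnorm := PadicInt.norm_le_one (Ring.multichoose (⟨x, hx'⟩ : ℤ_[p]) k)
  rw [PadicInt.norm_def, ← hcast, Padic.eq_padicNorm] at hnorm
  rw [poch_eq_factorial_mul_multichoose, mul_div_cancel_left₀ _ (mod_cast k.factorial_ne_zero)]
  exact_mod_cast hnorm

-- The Leibniz harmonic triangle: the beta values `n! h! / (n+h+1)!` are iterated differences of the
-- numbers `1 / (n+1)`, so their denominators are no worse.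
theorem mul_factorial_div_factorial_mem_padicIdeal {s : ℕ} {t : ℚ} (ht : t ∈ padicIdeal p s)
    {n h : ℕ} (hlt : n + h + 1 < p ^ s) :
    t * (n.factorial * h.factorial / (n + h + 1).factorial) ∈ padicIdeal p 1 := by
  induction h generalizing n with
  | zero =>
    have hmem : t / ((n + 1 : ℕ) : ℤ) ∈ padicIdeal p 1 :=
      div_intCast_mem_padicIdeal ht (by positivity) (by
        rw [abs_of_nonneg (by positivity)]; exact_mod_cast hlt)
    convert hmem using 1
    have := n.factorial_ne_zero
    rw [add_zero, Nat.factorial_succ, Nat.factorial_zero]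
    push_cast
    field_simp
  | succ h ih =>
    convert sub_mem (ih (by omega : n + h + 1 < _)) (ih (by omega : n + 1 + h + 1 < _)) using 1
    have := (n + h + 1).factorial_ne_zero
    rw [add_right_comm n 1 h, ← add_assoc n h 1, Nat.factorial_succ (n + h + 1),
      Nat.factorial_succ n, Nat.factorial_succ h]
    push_cast
    field_simp
    ring

theorem poch_div_factorial_mem_padicIdeal_one {s n i : ℕ} {x t : ℚ} (ht : t ∈ padicIdeal p s)
    (htx : x + n = t) (hni : n < i) (hi : i < p ^ s) :
    poch x i / i.factorial ∈ padicIdeal p 1 := by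
  obtain ⟨h, rfl⟩ := Nat.exists_eq_add_of_lt hni
  have ht0 : t ∈ padicIdeal p 0 := padicIdeal_antitone s.zero_le ht
  have hlow := poch_div_factorial_mem_padicIdeal (sub_mem one_mem_padicIdeal ht0) n
  have hhigh := poch_div_factorial_mem_padicIdeal (add_mem ht0 one_mem_padicIdeal) h
  convert mul_mem_padicIdeal (neg_one_pow_mem_padicIdeal n) (mul_mem_padicIdeal hlow
    (mul_mem_padicIdeal hhigh (mul_factorial_div_factorial_mem_padicIdeal ht hi))) using 1
  have := n.factorial_ne_zero
  have := h.factorial_ne_zero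
  have hsign : ((-1 : ℚ) ^ n) * (-1) ^ n = 1 := by rw [← mul_pow, neg_one_mul, neg_neg, one_pow]
  rw [← htx, poch_one_sub_add, add_assoc n, poch_add, poch_succ_left]
  field_simp
  linear_combination (-(poch x n) * (x + n) * poch (x + n + 1) h) * hsign

end PadicIntegrality

section FirstOrderExpansion

variable {p m : ℕ} [Fact p.Prime]

/-- `f ε = a + b ε + O(p^(2m) ε²)` with `a` integral and `b` divisible by `p^m`, uniformly in
`p`-integral `ε`. The factor `ε²` in the error term makes the linear term of an even function
detectable even for `p = 2`. -/
structure HasFirstOrderExpansion (p m : ℕ) [Fact p.Prime] (f : ℚ → ℚ) (a b : ℚ) : Prop where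
  const_mem : a ∈ padicIdeal p 0
  linear_mem : b ∈ padicIdeal p m
  exists_remainder : ∀ ε ∈ padicIdeal p 0, ∃ c ∈ padicIdeal p (2 * m), f ε = a + ε * b + ε ^ 2 * c

namespace HasFirstOrderExpansion

variable {f g : ℚ → ℚ} {a b a' b' w : ℚ}

theorem eval_mem (hf : HasFirstOrderExpansion p m f a b) {ε : ℚ} (hε : ε ∈ padicIdeal p 0) :
    f ε ∈ padicIdeal p 0 := by
  obtain ⟨c, hc, hfε⟩ := hf.exists_remainder ε hε
  rw [hfε, sq]
  exact add_mem (add_mem hf.const_mem (mul_mem_padicIdeal hε (padicIdeal_antitone m.zero_le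
    hf.linear_mem))) (mul_mem_padicIdeal (mul_mem_padicIdeal hε hε)
    (padicIdeal_antitone (Nat.zero_le _) hc))

theorem eval_zero (hf : HasFirstOrderExpansion p m f a b) : f 0 = a := by
  obtain ⟨c, -, h⟩ := hf.exists_remainder 0 (zero_mem _)
  rw [h]
  ring

theorem eval_one_sub_mem (hf : HasFirstOrderExpansion p m f a b) :
    f 1 - (a + b) ∈ padicIdeal p (2 * m) := by
  obtain ⟨c, hc, h⟩ := hf.exists_remainder 1 one_mem_padicIdeal
  rwa [h, one_mul, one_pow, one_mul, add_sub_cancel_left]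

protected theorem const (ha : a ∈ padicIdeal p 0) :
    HasFirstOrderExpansion p m (fun _ => a) a 0 :=
  ⟨ha, zero_mem _, fun _ _ => ⟨0, zero_mem _, by ring⟩⟩

protected theorem mul (hf : HasFirstOrderExpansion p m f a b)
    (hg : HasFirstOrderExpansion p m g a' b') :
    HasFirstOrderExpansion p m (fun ε => f ε * g ε) (a * a') (a * b' + a' * b) where
  const_mem := mul_mem_padicIdeal hf.const_mem hg.const_mem
  linear_mem := add_mem (mul_mem_padicIdeal hf.const_mem hg.linear_mem)
    (mul_mem_padicIdeal hg.const_mem hf.linear_mem)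
  exists_remainder ε hε := by
    obtain ⟨c, hc, hfε⟩ := hf.exists_remainder ε hε
    obtain ⟨c', hc', hgε⟩ := hg.exists_remainder ε hε
    have hbb' : b * b' ∈ padicIdeal p (2 * m) :=
      two_mul m ▸ mul_mem_padicIdeal_add hf.linear_mem hg.linear_mem
    have hlin : a' + ε * b' ∈ padicIdeal p 0 := add_mem hg.const_mem
      (mul_mem_padicIdeal hε (padicIdeal_antitone m.zero_le hg.linear_mem))
    refine ⟨f ε * c' + b * b' + (a' + ε * b') * c, add_mem (add_mem
      (mul_mem_padicIdeal (hf.eval_mem hε) hc') hbb') (mul_mem_padicIdeal hlin hc), ?_⟩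
    rw [hgε, hfε]
    ring

protected theorem sum {ι : Type*} {S : Finset ι} {f : ι → ℚ → ℚ} {a b : ι → ℚ}
    (h : ∀ i ∈ S, HasFirstOrderExpansion p m (f i) (a i) (b i)) :
    HasFirstOrderExpansion p m (fun ε => ∑ i ∈ S, f i ε) (∑ i ∈ S, a i) (∑ i ∈ S, b i) where
  const_mem := sum_mem fun i hi => (h i hi).const_mem
  linear_mem := sum_mem fun i hi => (h i hi).linear_mem
  exists_remainder ε hε := by
    choose! c hc hfε using fun i hi => (h i hi).exists_remainder ε hε
    refine ⟨∑ i ∈ S, c i, sum_mem hc, ?_⟩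
    rw [sum_congr rfl hfε, sum_add_distrib, sum_add_distrib, mul_sum, mul_sum]

protected theorem prod {ι : Type*} {S : Finset ι} {f : ι → ℚ → ℚ} {b : ι → ℚ}
    (h : ∀ i ∈ S, HasFirstOrderExpansion p m (f i) 1 (b i)) :
    HasFirstOrderExpansion p m (fun ε => ∏ i ∈ S, f i ε) 1 (∑ i ∈ S, b i) := by
  induction S using Finset.cons_induction with
  | empty => exact .const one_mem_padicIdeal
  | cons i S hi ih =>
    simp only [prod_cons, sum_cons]
    convert (h i (mem_cons_self i S)).mul (ih fun j hj => h j (mem_cons_of_mem hj)) using 1 <;> ring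

theorem one_sub_mul (hw : w ∈ padicIdeal p m) :
    HasFirstOrderExpansion p m (fun ε => 1 - ε * w) 1 (-w) :=
  ⟨one_mem_padicIdeal, neg_mem hw, fun _ _ => ⟨0, zero_mem _, by ring⟩⟩

theorem inv_one_sub_mul (hm : 0 < m) (hw : w ∈ padicIdeal p m) :
    HasFirstOrderExpansion p m (fun ε => (1 - ε * w)⁻¹) 1 w where
  const_mem := one_mem_padicIdeal
  linear_mem := hw
  exists_remainder ε hε := by
    have hεw : ε * w ∈ padicIdeal p 1 := padicIdeal_antitone hm (mul_mem_padicIdeal hε hw)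
    have hww : w * w ∈ padicIdeal p (2 * m) := two_mul m ▸ mul_mem_padicIdeal_add hw hw
    refine ⟨_, mul_mem_padicIdeal (inv_one_sub_mem_padicIdeal hεw) hww, ?_⟩
    have := one_sub_ne_zero hεw
    field_simp
    ring

theorem mul_one_sub (hw : w ∈ padicIdeal p m) :
    HasFirstOrderExpansion p m (fun ε => w * (1 - ε)) w (-w) :=
  ⟨padicIdeal_antitone m.zero_le hw, neg_mem hw, fun _ _ => ⟨0, zero_mem _, by ring⟩⟩

theorem mul_eval_one_sub_eval_zero_mem (hf : HasFirstOrderExpansion p m f a b) {e : ℕ} {c : ℚ}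
    (hc : c ∈ padicIdeal p e) (heven : c * f 2 = c * f (-2)) :
    c * (f 1 - f 0) ∈ padicIdeal p (e + 2 * m) := by
  have htwo : (2 : ℚ) ∈ padicIdeal p 0 := mod_cast natCast_mem_padicIdeal (p := p) 2
  obtain ⟨r, hr, hf1⟩ := hf.exists_remainder 1 one_mem_padicIdeal
  obtain ⟨u, hu, hf2⟩ := hf.exists_remainder 2 htwo
  obtain ⟨v, hv, hf2'⟩ := hf.exists_remainder (-2) (neg_mem htwo)
  have hlinear : c * b = c * (v - u) := by
    rw [hf2, hf2'] at heven
    linear_combination heven / 4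
  have hmem : c * (v - u + r) ∈ padicIdeal p (e + 2 * m) :=
    mul_mem_padicIdeal_add hc (add_mem (sub_mem hv hu) hr)
  convert hmem using 1
  rw [hf.eval_zero, hf1]
  linear_combination hlinear

end HasFirstOrderExpansion

end FirstOrderExpansion

section PochhammerExpansion

variable {p m s n N : ℕ} [Fact p.Prime] {x t T : ℚ}

theorem div_one_add_natCast_mem_padicIdeal (ht : t ∈ padicIdeal p s) {h : ℕ} (hh : h + 1 < p ^ s) :
    t / (1 + h) ∈ padicIdeal p 1 := by
  have hmem : t / ((h + 1 : ℕ) : ℤ) ∈ padicIdeal p 1 :=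
    div_intCast_mem_padicIdeal ht (by positivity) (by
      rw [abs_of_nonneg (by positivity)]; exact_mod_cast hh)
  rwa [Int.cast_natCast, Nat.cast_succ, add_comm] at hmem

theorem sq_div_one_add_sq_mem_padicIdeal (ht : t ∈ padicIdeal p s) {h : ℕ} (hh : h + 1 < p ^ s) :
    t ^ 2 / (1 + (h : ℚ)) ^ 2 ∈ padicIdeal p 2 := by
  rw [← div_pow]
  exact sq_mem_padicIdeal_two (div_one_add_natCast_mem_padicIdeal ht hh)

-- The only factor of `(x)_k` close to `0` is `x + n = t`; the others are units times `h - n`.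
theorem add_natCast_eq_mul_one_sub (htx : x + n = t) {h : ℕ} (hhn : h ≠ n) :
    x + h = ((h - n : ℤ) : ℚ) * (1 - -(t / (h - n : ℤ))) := by
  have hz : ((h - n : ℤ) : ℚ) ≠ 0 := Int.cast_ne_zero.2 (by omega)
  rw [sub_neg_eq_add, mul_add, mul_one, mul_div_cancel₀ _ hz, ← htx]
  push_cast
  ring

theorem div_natCast_sub_natCast_mem_padicIdeal (ht : t ∈ padicIdeal p s) (hn : n < p ^ s) {h : ℕ}
    (hh : h < p ^ s) (hhn : h ≠ n) : t / (h - n : ℤ) ∈ padicIdeal p 1 := by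
  have hn' : (n : ℤ) < (p : ℤ) ^ s := mod_cast hn
  have hh' : (h : ℤ) < (p : ℤ) ^ s := mod_cast hh
  exact div_intCast_mem_padicIdeal ht (by omega) (abs_lt.2 ⟨by omega, by omega⟩)

theorem add_natCast_ne_zero (ht : t ∈ padicIdeal p s) (htx : x + n = t) (hn : n < p ^ s) {h : ℕ}
    (hh : h < p ^ s) (hhn : h ≠ n) : x + h ≠ 0 := by
  rw [add_natCast_eq_mul_one_sub htx hhn]
  exact mul_ne_zero (Int.cast_ne_zero.2 (by omega))
    (one_sub_ne_zero (neg_mem (div_natCast_sub_natCast_mem_padicIdeal ht hn hh hhn)))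

theorem sq_div_add_sq_mem_padicIdeal (ht : t ∈ padicIdeal p s) (htx : x + n = t) (hn : n < p ^ s)
    {h : ℕ} (hh : h < p ^ s) (hhn : h ≠ n) : t ^ 2 / (x + h) ^ 2 ∈ padicIdeal p 2 := by
  have hw := div_natCast_sub_natCast_mem_padicIdeal ht hn hh hhn
  rw [← div_pow, add_natCast_eq_mul_one_sub htx hhn, ← div_div, div_eq_mul_inv, mul_comm]
  exact sq_mem_padicIdeal_two (mul_mem_padicIdeal (inv_one_sub_mem_padicIdeal (neg_mem hw)) hw)

theorem sq_sub_ne_zero {c V : ℚ} (hc : c ≠ 0) (hV : V / c ^ 2 ∈ padicIdeal p 1) :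
    c ^ 2 - V ≠ 0 := by
  rw [← mul_div_cancel₀ V (pow_ne_zero 2 hc), ← mul_one_sub]
  exact mul_ne_zero (pow_ne_zero 2 hc) (one_sub_ne_zero hV)

theorem one_add_sq_sub_mul_ne_zero (hT : ∀ h < N, T / (1 + (h : ℚ)) ^ 2 ∈ padicIdeal p 2) {ε : ℚ}
    (hε : ε ∈ padicIdeal p 0) : ∀ h < N, (1 + (h : ℚ)) ^ 2 - ε * T ≠ 0 := fun h hh =>
  sq_sub_ne_zero (p := p) (by positivity) (by
    rw [mul_div_assoc]
    exact padicIdeal_antitone one_le_two (mul_mem_padicIdeal hε (hT h hh)))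

theorem hasFirstOrderExpansion_pochPair (hx : x ∈ padicIdeal p 0) {k : ℕ}
    (hne : ∀ h < k, x + h ≠ 0) (hT : ∀ h < k, T / (x + h) ^ 2 ∈ padicIdeal p m) :
    HasFirstOrderExpansion p m (fun ε => pochPair x (ε * T) k / (k.factorial : ℚ) ^ 2)
      ((poch x k / k.factorial) ^ 2)
      ((poch x k / k.factorial) ^ 2 * -∑ h ∈ range k, T / (x + h) ^ 2) := by
  have hpoch := poch_div_factorial_mem_padicIdeal hx k
  convert (HasFirstOrderExpansion.const (m := m) (mul_mem_padicIdeal hpoch hpoch)).mul (.prod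
    fun h hh => .one_sub_mul (hT h (mem_range.1 hh))) using 1
  · funext ε
    rw [pochPair_mul_eq_mul_prod hne]
    ring
  · ring
  · rw [sum_neg_distrib]
    ring

theorem hasFirstOrderExpansion_inv_pochPair_one (hm : 0 < m) {k : ℕ}
    (hT : ∀ h < k, T / (1 + (h : ℚ)) ^ 2 ∈ padicIdeal p m) :
    HasFirstOrderExpansion p m (fun ε => (k.factorial : ℚ) ^ 2 / pochPair 1 (ε * T) k) 1
      (∑ h ∈ range k, T / (1 + (h : ℚ)) ^ 2) := by
  convert HasFirstOrderExpansion.prod fun h hh =>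
    .inv_one_sub_mul hm (hT h (mem_range.1 hh)) using 1
  funext ε
  rw [pochPair_mul_eq_mul_prod fun h _ => by positivity, poch_one_eq_factorial, prod_inv_distrib]
  have := k.factorial_ne_zero
  field_simp

theorem pochPair_mul_sq_eq {i : ℕ} (htx : x + n = t) (hni : n < i)
    (hne : ∀ h < i, h ≠ n → x + h ≠ 0) (ε : ℚ) :
    pochPair x (ε * t ^ 2) i = poch x i ^ 2 * (1 - ε) *
      ∏ h ∈ (range i).erase n, (1 - ε * (t ^ 2 / (x + h) ^ 2)) := by
  have hn : n ∈ range i := mem_range.2 hni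
  have hfactor : ∀ h ∈ (range i).erase n, (x + (h : ℚ)) ^ 2 - ε * t ^ 2 =
      (x + h) ^ 2 * (1 - ε * (t ^ 2 / (x + h) ^ 2)) := fun h hh => by
    obtain ⟨hhn, hhi⟩ := mem_erase.1 hh
    have := hne h (mem_range.1 hhi) hhn
    field_simp
  rw [pochPair, poch, ← mul_prod_erase _ _ hn, ← mul_prod_erase _ _ hn, prod_congr rfl hfactor,
    prod_mul_distrib, prod_pow, htx]
  ring

theorem exists_hasFirstOrderExpansion_pochPair (hx : x ∈ padicIdeal p 0) (ht : t ∈ padicIdeal p s)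
    (htx : x + n = t) (hn : n < p ^ s) {i : ℕ} (hi : i < p ^ s) :
    ∃ a b, HasFirstOrderExpansion p 2
      (fun ε => pochPair x (ε * t ^ 2) i / (i.factorial : ℚ) ^ 2) a b := by
  have hne : ∀ h < i, h ≠ n → x + h ≠ 0 := fun h hh hhn =>
    add_natCast_ne_zero ht htx hn (hh.trans hi) hhn
  have hmem : ∀ h < i, h ≠ n → t ^ 2 / (x + h) ^ 2 ∈ padicIdeal p 2 := fun h hh hhn =>
    sq_div_add_sq_mem_padicIdeal ht htx hn (hh.trans hi) hhn
  rcases Nat.lt_or_ge n i with hni | hin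
  · have hpoch := sq_mem_padicIdeal_two (poch_div_factorial_mem_padicIdeal_one ht htx hni hi)
    have hfactor : ∀ ε, pochPair x (ε * t ^ 2) i / (i.factorial : ℚ) ^ 2 =
        (poch x i / i.factorial) ^ 2 * (1 - ε) *
          ∏ h ∈ (range i).erase n, (1 - ε * (t ^ 2 / (x + h) ^ 2)) := fun ε => by
      rw [pochPair_mul_sq_eq htx hni hne]
      ring
    simp only [hfactor]
    exact ⟨_, _, (HasFirstOrderExpansion.mul_one_sub hpoch).mul (.prod fun h hh =>
      .one_sub_mul (hmem h (mem_range.1 (mem_of_mem_erase hh)) (ne_of_mem_erase hh)))⟩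
  · exact ⟨_, _, hasFirstOrderExpansion_pochPair hx (fun h hh => hne h hh (by omega))
      fun h hh => hmem h hh (by omega)⟩

end PochhammerExpansion

section Congruence

variable {p s n N : ℕ} [Fact p.Prime] {x t : ℚ}

theorem wellPoisedCoeff_mul_eq (x U V y z : ℚ) (i j : ℕ) :
    wellPoisedCoeff x U V i j * (poch y (i + j) * poch z (i + j)) =
      poch (1 - x) i / i.factorial * (poch (1 - x) j / j.factorial *
        (poch y (i + j) / (i + j).factorial * (poch z (i + j) / (i + j).factorial))) *
      (pochPair x V i / (i.factorial : ℚ) ^ 2 * ((i.factorial : ℚ) ^ 2 / pochPair 1 U i *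
        (((i + j).factorial : ℚ) ^ 2 / pochPair 1 V (i + j)))) := by
  have := i.factorial_ne_zero
  have := (i + j).factorial_ne_zero
  simp only [wellPoisedCoeff, div_eq_mul_inv, mul_inv]
  field_simp

theorem exists_hasFirstOrderExpansion_wellPoisedCoeff (hx : x ∈ padicIdeal p 0)
    (ht : t ∈ padicIdeal p s) (htx : x + n = t) (hn : n < p ^ s) (hN : N < p ^ s) (i j : ℕ) :
    ∃ a b, HasFirstOrderExpansion p 2 (fun ε => wellPoisedCoeff x (ε * -t ^ 2) (ε * t ^ 2) i j *
      (poch (-(N : ℚ)) (i + j) * poch (x + N + 1) (i + j))) a b := by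
  rcases Nat.lt_or_ge N (i + j) with hNij | hijN
  · refine ⟨0, 0, ?_⟩
    simp only [poch_neg_natCast_of_lt hNij, zero_mul, mul_zero]
    exact .const (zero_mem _)
  · have hNmem := natCast_mem_padicIdeal (p := p) N
    have hcoeff := poch_div_factorial_mem_padicIdeal (sub_mem one_mem_padicIdeal hx)
    have hconst := mul_mem_padicIdeal (hcoeff i) (mul_mem_padicIdeal (hcoeff j) (mul_mem_padicIdeal
      (poch_div_factorial_mem_padicIdeal (neg_mem hNmem) (i + j)) (poch_div_factorial_mem_padicIdeal
        (add_mem (add_mem hx hNmem) one_mem_padicIdeal) (i + j))))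
    have hsq : ∀ h < i + j, t ^ 2 / (1 + (h : ℚ)) ^ 2 ∈ padicIdeal p 2 := fun h hh =>
      sq_div_one_add_sq_mem_padicIdeal ht (by omega)
    have hsq_neg : ∀ h < i, -t ^ 2 / (1 + (h : ℚ)) ^ 2 ∈ padicIdeal p 2 := fun h hh =>
      neg_div ((1 + (h : ℚ)) ^ 2) _ ▸ neg_mem (hsq h (by omega))
    obtain ⟨a, b, hnum⟩ :=
      exists_hasFirstOrderExpansion_pochPair hx ht htx hn (by omega : i < p ^ s)
    simp only [wellPoisedCoeff_mul_eq]
    exact ⟨_, _, (HasFirstOrderExpansion.const hconst).mul (hnum.mul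
      ((hasFirstOrderExpansion_inv_pochPair_one two_pos hsq_neg).mul
        (hasFirstOrderExpansion_inv_pochPair_one two_pos hsq)))⟩

theorem wellPoisedSum_sub_wellPoisedSum_zero_mem_padicIdeal (hx : x ∈ padicIdeal p 0)
    (ht : t ∈ padicIdeal p s) (htx : x + n = t) (hn : n < p ^ s) (hN : N < p ^ s)
    (hpoch : poch x (N + 1) / N.factorial ∈ padicIdeal p s) :
    wellPoisedSum x (-t ^ 2) (t ^ 2) N - wellPoisedSum x 0 0 N ∈ padicIdeal p (s + 4) := by
  choose a b hcoeff using exists_hasFirstOrderExpansion_wellPoisedCoeff hx ht htx hn hN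
  have hexp := HasFirstOrderExpansion.sum (S := range (N + 1)) fun i _ =>
    HasFirstOrderExpansion.sum (S := range (N + 1)) fun j _ => hcoeff i j
  have hsq : ∀ h < N, t ^ 2 / (1 + (h : ℚ)) ^ 2 ∈ padicIdeal p 2 := fun h hh =>
    sq_div_one_add_sq_mem_padicIdeal ht (by omega)
  have hsq_neg : ∀ h < N, -t ^ 2 / (1 + (h : ℚ)) ^ 2 ∈ padicIdeal p 2 := fun h hh =>
    neg_div ((1 + (h : ℚ)) ^ 2) _ ▸ neg_mem (hsq h hh)
  have hsum : ∀ ε ∈ padicIdeal p 0, wellPoisedSum x (ε * -t ^ 2) (ε * t ^ 2) N = _ := fun ε hε =>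
    wellPoisedSum_eq_sum_wellPoisedCoeff x (one_add_sq_sub_mul_ne_zero hsq_neg hε)
      (one_add_sq_sub_mul_ne_zero hsq hε)
  have htwo : (2 : ℚ) ∈ padicIdeal p 0 := mod_cast natCast_mem_padicIdeal (p := p) 2
  have hprefactor : (-1) ^ N * poch x (N + 1) / N.factorial ∈ padicIdeal p s :=
    mul_div_assoc ((-1 : ℚ) ^ N) _ _ ▸ mul_mem_padicIdeal (neg_one_pow_mem_padicIdeal N) hpoch
  have hmem := hexp.mul_eval_one_sub_eval_zero_mem hprefactor (by
    rw [← hsum 2 htwo, ← hsum (-2) (neg_mem htwo), wellPoisedSum_comm, neg_mul_neg, neg_mul_comm])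
  rwa [mul_sub, ← hsum 1 one_mem_padicIdeal, ← hsum 0 (zero_mem _), one_mul, one_mul, zero_mul,
    zero_mul] at hmem

theorem whipple_summand_sub_mem_padicIdeal (hx : x ∈ padicIdeal p 0) (ht : t ∈ padicIdeal p s)
    (htx : x + n = t) (hn : n < p ^ s) {k : ℕ} (hkn : k ≤ n) :
    poch (1 - x) k * pochPair x (t ^ 2) k / (k.factorial * pochPair 1 (-t ^ 2) k) -
      poch x k ^ 2 * poch (1 - x) k / (k.factorial : ℚ) ^ 3 *
        (1 - ∑ h ∈ range k, (t ^ 2 / (1 + (h : ℚ)) ^ 2 + t ^ 2 / (x + h) ^ 2)) ∈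
      padicIdeal p 4 := by
  have hnum := hasFirstOrderExpansion_pochPair (m := 2) (T := t ^ 2) hx (k := k)
    (fun h hh => add_natCast_ne_zero ht htx hn (by omega) (by omega))
    (fun h hh => sq_div_add_sq_mem_padicIdeal ht htx hn (by omega) (by omega))
  have hden := hasFirstOrderExpansion_inv_pochPair_one (p := p) (T := -t ^ 2) two_pos (k := k)
    (fun h hh => neg_div ((1 + (h : ℚ)) ^ 2) _ ▸
      neg_mem (sq_div_one_add_sq_mem_padicIdeal ht (by omega)))
  have hmem := mul_mem_padicIdeal
    (poch_div_factorial_mem_padicIdeal (sub_mem one_mem_padicIdeal hx) k)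
    (hnum.mul hden).eval_one_sub_mem
  convert hmem using 1
  have := k.factorial_ne_zero
  simp only [neg_div, sum_neg_distrib, sum_add_distrib, one_mul]
  field_simp
  ring

theorem wellPoisedSum_zero_sub_mem_padicIdeal (hx : x ∈ padicIdeal p 0) (ht : t ∈ padicIdeal p s)
    (htx : x + n = t) (hnN : n ≤ N) (hN : N < p ^ s)
    (hpoch : poch x (N + 1) / N.factorial ∈ padicIdeal p s) :
    wellPoisedSum x 0 0 N - (-1) ^ n * t * ∑ k ∈ range (n + 1),
      poch x k ^ 2 * poch (1 - x) k / (k.factorial : ℚ) ^ 3 *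
        (1 - ∑ h ∈ range k, (t ^ 2 / (1 + (h : ℚ)) ^ 2 + t ^ 2 / (x + h) ^ 2)) ∈
      padicIdeal p (s + 4) := by
  have hn : n < p ^ s := hnN.trans_lt hN
  have hsq : ∀ h < n, t ^ 2 / (1 + (h : ℚ)) ^ 2 ∈ padicIdeal p 2 := fun h hh =>
    sq_div_one_add_sq_mem_padicIdeal ht (by omega)
  have hwhipple : wellPoisedSum x (-t ^ 2) (t ^ 2) N = _ :=
    (wellPoisedSum_sq_of_le htx hnN _).trans <| wellPoisedSum_sq htx
      (fun h hh => add_natCast_ne_zero ht htx hn (by omega) (by omega))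
      (by simpa using one_add_sq_sub_mul_ne_zero hsq (neg_mem one_mem_padicIdeal))
      (by simpa using one_add_sq_sub_mul_ne_zero hsq one_mem_padicIdeal)
  have hdeform := wellPoisedSum_sub_wellPoisedSum_zero_mem_padicIdeal hx ht htx hn hN hpoch
  have hsummands := mul_mem_padicIdeal_add
    (mul_mem_padicIdeal (neg_one_pow_mem_padicIdeal n) ht) (sum_mem fun k hk =>
      whipple_summand_sub_mem_padicIdeal hx ht htx hn (Nat.lt_succ_iff.1 (mem_range.1 hk)))
  rw [hwhipple] at hdeform
  rw [sum_sub_distrib, mul_sub] at hsummands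
  convert sub_mem hsummands hdeform using 1
  ring

theorem poch_succ_div_factorial_mem_padicIdeal (hx : x ∈ padicIdeal p 0)
    (ht : t ∈ padicIdeal p s) (htx : x + n = t) (hN : N = n ∨ N = p ^ s - 1) :
    poch x (N + 1) / N.factorial ∈ padicIdeal p s := by
  rcases hN with rfl | hN
  · rw [poch_succ, htx, mul_div_right_comm]
    exact mul_mem_padicIdeal (poch_div_factorial_mem_padicIdeal hx N) ht
  · have hpow : ((N + 1 : ℕ) : ℚ) = (p : ℚ) ^ s := by
      have := Nat.pow_pos (n := s) (Fact.out : p.Prime).pos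
      exact_mod_cast (by omega : N + 1 = p ^ s)
    convert mul_mem_padicIdeal (poch_div_factorial_mem_padicIdeal hx (N + 1))
      (natCast_pow_mem_padicIdeal s) using 1
    have := N.factorial_ne_zero
    rw [← hpow, Nat.factorial_succ]
    push_cast
    field_simp

end Congruence

section Rescaling

variable {d : ℚ}

theorem sum_eq_mul_wellPoisedSum_zero_zero (hd : d ≠ 0) (r : ℚ) (N : ℕ) :
    ∑ k ∈ range (N + 1), (-1 : ℚ) ^ k * (2 * d * k + r) * poch (r / d) k ^ 5 /
      (k.factorial : ℚ) ^ 5 = d * wellPoisedSum (r / d) 0 0 N := by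
  rw [wellPoisedSum_zero_zero, mul_sum]
  refine sum_congr rfl fun k _ => ?_
  field_simp
  ring

theorem pow_three_mul_sum_Icc (hd : d ≠ 0) (q r : ℚ) (k : ℕ) :
    q ^ 3 * ∑ j ∈ Icc 1 k, (1 / (d * j) ^ 2 + 1 / (d * j - d + r) ^ 2) =
      q * ∑ h ∈ range k, ((q / d) ^ 2 / (1 + (h : ℚ)) ^ 2 + (q / d) ^ 2 / (r / d + h) ^ 2) := by
  rw [pow_succ', mul_assoc, ← Ico_add_one_right_eq_Icc, sum_Ico_eq_sum_range,
    add_tsub_cancel_right, mul_sum]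
  refine congrArg _ (sum_congr rfl fun h _ => ?_)
  have hfactor : d * ((1 + h : ℕ) : ℚ) - d + r = d * (r / d + h) := by
    push_cast
    field_simp
    ring
  rw [hfactor]
  push_cast
  field_simp

theorem sum_mul_sub_pow_three_mul_sum_Icc (hd : d ≠ 0) (q r : ℚ) (c : ℕ → ℚ) (S : Finset ℕ) :
    ∑ k ∈ S, c k * (q - q ^ 3 * ∑ j ∈ Icc 1 k, (1 / (d * j) ^ 2 + 1 / (d * j - d + r) ^ 2)) =
      d * (q / d * ∑ k ∈ S, c k * (1 - ∑ h ∈ range k,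
        ((q / d) ^ 2 / (1 + (h : ℚ)) ^ 2 + (q / d) ^ 2 / (r / d + h) ^ 2))) := by
  rw [← mul_assoc, mul_div_cancel₀ q hd, mul_sum]
  refine sum_congr rfl fun k _ => ?_
  rw [pow_three_mul_sum_Icc hd]
  ring

end Rescaling

theorem stmt14_general (d s p : ℕ) (hp : p.Prime) (r : ℤ)
    (hr1 : (d : ℤ) + p ^ s - d * p ^ s ≤ r) (hgcd : Nat.gcd p d = 1)
    (m₀ : ℕ) (hm₀ : (m₀ : ℤ) * d = (p : ℤ) ^ s - r)
    (m : ℕ) (hm : m = m₀ ∨ m = p ^ s - 1) :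
    pcong p (s + 4)
      (∑ k ∈ range (m + 1),
        (-1 : ℚ) ^ k * ((2 * d * k : ℚ) + r) * poch ((r : ℚ) / d) k ^ 5 /
          (k.factorial : ℚ) ^ 5)
      ((-1 : ℚ) ^ ((r - (p : ℤ) ^ s) / d) *
        ∑ k ∈ range (m₀ + 1),
          (poch ((r : ℚ) / d) k ^ 2 * poch (1 - (r : ℚ) / d) k / (k.factorial : ℚ) ^ 3) *
          ((p : ℚ) ^ s - (p : ℚ) ^ (3 * s) *
            ∑ j ∈ Icc 1 k,
              (1 / ((d : ℚ) * j) ^ 2 + 1 / ((d : ℚ) * j - d + r) ^ 2))) := by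
  have : Fact p.Prime := ⟨hp⟩
  have hd_pos : 0 < d :=
    Nat.pos_of_ne_zero fun h => hp.ne_one (by rwa [h, Nat.gcd_zero_right] at hgcd)
  have hd : (d : ℚ) ≠ 0 := Nat.cast_ne_zero.2 hd_pos.ne'
  have hx : (r : ℚ) / d ∈ padicIdeal p 0 :=
    div_natCast_mem_padicIdeal (intCast_mem_padicIdeal r) hgcd
  have ht : (p : ℚ) ^ s / d ∈ padicIdeal p s :=
    div_natCast_mem_padicIdeal (natCast_pow_mem_padicIdeal s) hgcd
  have htx : (r : ℚ) / d + m₀ = (p : ℚ) ^ s / d := by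
    have hm₀_cast : (m₀ : ℚ) * d = (p : ℚ) ^ s - r := mod_cast hm₀
    rw [div_add' _ _ _ hd, hm₀_cast, add_sub_cancel]
  have hm₀_lt : (m₀ : ℤ) < (p ^ s : ℕ) :=
    lt_of_mul_lt_mul_right (by push_cast; linarith) d.cast_nonneg
  have hsign : (-1 : ℚ) ^ ((r - (p : ℤ) ^ s) / d) = (-1) ^ m₀ := by
    rw [← neg_sub, ← hm₀, ← neg_mul, Int.mul_ediv_cancel _ (Nat.cast_ne_zero.2 hd_pos.ne'),
      zpow_neg, zpow_natCast, ← inv_pow, inv_neg_one]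
  rw [hsign, sum_eq_mul_wellPoisedSum_zero_zero hd, mul_comm 3 s, pow_mul,
    sum_mul_sub_pow_three_mul_sum_Icc hd, mul_left_comm, ← mul_assoc ((-1) ^ m₀)]
  apply pcong_of_sub_mem_padicIdeal
  rw [← mul_sub]
  exact mul_mem_padicIdeal (natCast_mem_padicIdeal d) (wellPoisedSum_zero_sub_mem_padicIdeal hx ht
    htx (by omega) (by omega) (poch_succ_div_factorial_mem_padicIdeal hx ht htx hm))

theorem stmt14 (d s : ℕ) (hd : 0 < d) (hs : 0 < s) (p : ℕ) (hp : p.Prime) (hodd : Odd p)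
    (r : ℤ) (hr1 : (d : ℤ) + p ^ s - d * p ^ s ≤ r) (hr2 : r ≤ (p : ℤ) ^ s)
    (hgcd : Nat.gcd p d = 1) (hmod : ((p : ℤ) ^ s) ≡ r [ZMOD (d : ℤ)])
    (m₀ : ℕ) (hm₀ : (m₀ : ℤ) * d = (p : ℤ) ^ s - r)
    (m : ℕ) (hm : m = m₀ ∨ m = p ^ s - 1) :
    pcong p (s + 4)
      (∑ k ∈ Finset.range (m + 1),
        (-1 : ℚ) ^ k * ((2 * d * k : ℚ) + r) * poch ((r : ℚ) / d) k ^ 5 /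
          (k.factorial : ℚ) ^ 5)
      ((-1 : ℚ) ^ ((r - (p : ℤ) ^ s) / d) *
        ∑ k ∈ Finset.range (m₀ + 1),
          (poch ((r : ℚ) / d) k ^ 2 * poch (1 - (r : ℚ) / d) k / (k.factorial : ℚ) ^ 3) *
          ((p : ℚ) ^ s - (p : ℚ) ^ (3 * s) *
            ∑ j ∈ Finset.Icc 1 k,
              (1 / ((d : ℚ) * j) ^ 2 + 1 / ((d : ℚ) * j - d + r) ^ 2))) :=
  stmt14_general d s p hp r hr1 hgcd m₀ hm₀ m hm
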